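/- arXiv:1111.3095 — 2 statements merged into one kernel-verified Lean document; each statement's English description precedes it below -/
import Mathlib

section
/- (Aronszajn–Krein formula.) For all α, β ∈ ℝ and every z ∈ ℂ∖ℝ, one has (1 + (α − β)·𝒦_{μ_β}(z))·𝒦_{μ_α}(z) = 𝒦_{μ_β}(z). -/
/-!
If `u` and `v` solve `(A_α - z) u = φ = (A_β - z) v` and `ℓ = ⟨·, φ⟩`, then
`(A_β - z) u = φ - (α - β) ℓ(u) φ = (A_β - z) (v - (α - β) ℓ(u) v)`, and `A_β - z` is injective
because self-adjoint operators have real spectrum. Applying `ℓ` to `u = v - (α - β) ℓ(u) v` gives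
the formula, since `ℓ(u)` and `ℓ(v)` are the Cauchy transforms of `μ_α` and `μ_β` at `z`.
-/

open MeasureTheory Complex Set

local notation "⟪" x ", " y "⟫" => @inner ℂ _ _ x y

lemma one_add_mul_mul_eq_of_add_smul_eq {R E F : Type*} [CommRing R] [AddCommGroup E] [Module R E]
    [AddCommGroup F] [Module R F] {S : E →ₗ[R] F} (hS : Function.Injective S) (ℓ : E →ₗ[R] R)
    {φ : F} {u v : E} {c : R} (hv : S v = φ) (hu : S u + (c * ℓ u) • φ = φ) :
    (1 + c * ℓ v) * ℓ u = ℓ v := by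
  have huv : u + (c * ℓ u) • v = v := hS <| by rw [map_add, map_smul, hv, hu]
  calc (1 + c * ℓ v) * ℓ u = ℓ (u + (c * ℓ u) • v) := by
        rw [map_add, map_smul, smul_eq_mul]; ring
    _ = ℓ v := by rw [huv]

section Multiplication

variable {X 𝕜 : Type*} [MeasurableSpace X] [RCLike 𝕜] {μ : Measure X}

lemma isSelfAdjoint_of_ae_eq_ofReal_mul {M : Lp 𝕜 2 μ →L[𝕜] Lp 𝕜 2 μ} {w : X → ℝ}
    (hM : ∀ g : Lp 𝕜 2 μ, M g =ᵐ[μ] fun x => (w x : 𝕜) * g x) : IsSelfAdjoint M := by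
  rw [ContinuousLinearMap.isSelfAdjoint_iff_isSymmetric]
  intro f g
  simp only [ContinuousLinearMap.coe_coe, L2.inner_def]
  refine integral_congr_ae ?_
  filter_upwards [hM f, hM g] with x hf hg
  rw [hf, hg, ← smul_eq_mul, ← smul_eq_mul, inner_smul_left, inner_smul_right, RCLike.conj_ofReal]

lemma eq_add_smul_rankOne_of_ae_eq {B M : Lp 𝕜 2 μ →L[𝕜] Lp 𝕜 2 μ} {φ ψ : Lp 𝕜 2 μ} {w : X → 𝕜}
    {a : 𝕜} (hφ : φ =ᵐ[μ] fun _ => 1) (hM : ∀ g : Lp 𝕜 2 μ, M g =ᵐ[μ] fun x => w x * g x)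
    (hB : ∀ g : Lp 𝕜 2 μ, B g =ᵐ[μ] fun x => w x * g x + a * inner 𝕜 ψ g) :
    B = M + a • InnerProductSpace.rankOne 𝕜 φ ψ := by
  ext1 g
  have hrank : (M + a • InnerProductSpace.rankOne 𝕜 φ ψ) g = M g + (a * inner 𝕜 ψ g) • φ := by
    simp [smul_smul]
  rw [hrank]
  refine Lp.ext ?_
  filter_upwards [hφ, hM g, hB g, Lp.coeFn_add (M g) ((a * inner 𝕜 ψ g) • φ),
    Lp.coeFn_smul (a * inner 𝕜 ψ g) φ] with x hφx hMx hBx hadd hsmul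
  rw [hBx, hadd, Pi.add_apply, hsmul, Pi.smul_apply, smul_eq_mul, hMx, hφx, mul_one]

end Multiplication

section SelfAdjoint

variable {H : Type*} [NormedAddCommGroup H] [InnerProductSpace ℂ H]

/-- `ν` is the spectral measure of the bounded self-adjoint operator `T` with respect to `φ`:
its Cauchy transform is `z ↦ ⟨(T - z)⁻¹ φ, φ⟩` off the real axis. The vector `(T - z)⁻¹ φ` is
encoded as a solution `g` of `T g - z g = φ`. -/
structure IsSpectralMeasure (T : H →L[ℂ] H) (φ : H) (ν : Measure ℝ) : Prop where
  isFiniteMeasure : IsFiniteMeasure ν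
  inner_eq_integral : ∀ z : ℂ, z.im ≠ 0 → ∀ g : H, T g - z • g = φ →
    ⟪φ, g⟫ = ∫ t, ((t : ℂ) - z)⁻¹ ∂ν

variable [CompleteSpace H]

lemma bijective_sub_smul_one_of_isSelfAdjoint {T : H →L[ℂ] H} (hT : IsSelfAdjoint T) {z : ℂ}
    (hz : z.im ≠ 0) : Function.Bijective (T - z • (1 : H →L[ℂ] H)) := by
  have hunit : IsUnit (algebraMap ℂ (H →L[ℂ] H) z - T) :=
    spectrum.notMem_iff.1 fun h => hz (hT.im_eq_zero_of_mem_spectrum h)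
  rw [← ContinuousLinearMap.isUnit_iff_bijective, ← Algebra.algebraMap_eq_smul_one]
  simpa only [neg_sub] using hunit.neg

lemma isSelfAdjoint_add_smul_rankOne {T : H →L[ℂ] H} (hT : IsSelfAdjoint T) (φ : H) (α : ℝ) :
    IsSelfAdjoint (T + (α : ℂ) • InnerProductSpace.rankOne ℂ φ φ) :=
  hT.add <| .smul (conj_ofReal α) (InnerProductSpace.isPositive_rankOne_self φ).isSelfAdjoint

theorem aronszajn_krein_formula_general {T : H →L[ℂ] H} (hT : IsSelfAdjoint T) {φ : H} {α β : ℝ}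
    {μα μβ : Measure ℝ}
    (hα : IsSpectralMeasure (T + (α : ℂ) • InnerProductSpace.rankOne ℂ φ φ) φ μα)
    (hβ : IsSpectralMeasure (T + (β : ℂ) • InnerProductSpace.rankOne ℂ φ φ) φ μβ)
    {z : ℂ} (hz : z.im ≠ 0) :
    (1 + ((α : ℂ) - (β : ℂ)) * ∫ t, ((t : ℂ) - z)⁻¹ ∂μβ) * (∫ t, ((t : ℂ) - z)⁻¹ ∂μα)
      = ∫ t, ((t : ℂ) - z)⁻¹ ∂μβ := by
  have hbij (γ : ℝ) :=
    bijective_sub_smul_one_of_isSelfAdjoint (isSelfAdjoint_add_smul_rankOne hT φ γ) hz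
  obtain ⟨u, hu⟩ := (hbij α).surjective φ
  obtain ⟨v, hv⟩ := (hbij β).surjective φ
  rw [← hα.inner_eq_integral z hz u hu, ← hβ.inner_eq_integral z hz v hv]
  refine one_add_mul_mul_eq_of_add_smul_eq (hbij β).injective (innerSL ℂ φ).toLinearMap hv ?_
  calc (T + (β : ℂ) • InnerProductSpace.rankOne ℂ φ φ - z • 1) u + (((α : ℂ) - β) * ⟪φ, u⟫) • φ
      = (T + (α : ℂ) • InnerProductSpace.rankOne ℂ φ φ - z • 1) u := by
        simp only [sub_apply, add_apply, smul_apply, InnerProductSpace.rankOne_apply]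
        module
    _ = φ := hu

end SelfAdjoint

/-- **Aronszajn–Krein formula.** For all `α, β ∈ ℝ` and every nonreal `z`,
`(1 + (α − β)·𝒦_{μ_β}(z))·𝒦_{μ_α}(z) = 𝒦_{μ_β}(z)`. -/
theorem aronszajn_krein_formula
{μ : Measure ℝ} [IsFiniteMeasure μ]
    (hsupp : ∃ K : Set ℝ, IsCompact K ∧ μ Kᶜ = 0)
    (one : Lp ℂ 2 μ) (hone : (one : ℝ → ℂ) =ᵐ[μ] fun _ => 1)
    (A : ℝ → (Lp ℂ 2 μ →L[ℂ] Lp ℂ 2 μ))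
    (hA : ∀ (α : ℝ) (g : Lp ℂ 2 μ),
      (A α g : ℝ → ℂ) =ᵐ[μ] fun t => t * g t + (α : ℂ) * ⟪one, g⟫)
    (μm : ℝ → Measure ℝ)
    (hμm_fin : ∀ α, IsFiniteMeasure (μm α))
    (hμm0 : μm 0 = μ)
    (hres : ∀ (α : ℝ) (z : ℂ), z.im ≠ 0 → ∀ g : Lp ℂ 2 μ,
      A α g - z • g = one → ⟪one, g⟫ = ∫ t, ((t : ℂ) - z)⁻¹ ∂(μm α))
    (α β : ℝ) (z : ℂ) (hz : z.im ≠ 0) :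
    (1 + ((α : ℂ) - (β : ℂ)) * ∫ t, ((t : ℂ) - z)⁻¹ ∂(μm β)) *
        (∫ t, ((t : ℂ) - z)⁻¹ ∂(μm α))
      = ∫ t, ((t : ℂ) - z)⁻¹ ∂(μm β) := by
  have hA₀ (g : Lp ℂ 2 μ) : A 0 g =ᵐ[μ] fun t => (t : ℂ) * g t := by simpa using hA 0 g
  have hA_eq (γ : ℝ) : A γ = A 0 + (γ : ℂ) • InnerProductSpace.rankOne ℂ one one :=
    eq_add_smul_rankOne_of_ae_eq hone hA₀ (hA γ)
  have hspec (γ : ℝ) :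
      IsSpectralMeasure (A 0 + (γ : ℂ) • InnerProductSpace.rankOne ℂ one one) one (μm γ) :=
    hA_eq γ ▸ ⟨hμm_fin γ, hres γ⟩
  exact aronszajn_krein_formula_general
    (isSelfAdjoint_of_ae_eq_ofReal_mul hA₀) (hspec α) (hspec β) hz
end

section
/- (Aronszajn–Donoghue.) For any two coupling constants α, β ∈ ℝ with α ≠ β, the singular parts (μ_α)_s and (μ_β)_s (with respect to Lebesgue measure) are mutually singular measures on ℝ. -/
/-!
Write `F_ν(z) = ∫ (t - z)⁻¹ dν(t)`. The function `g(t) = (1 + α F_μ(z))⁻¹ (t - z)⁻¹` solves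
`(A_α - z) g = 1`, which gives the Aronszajn–Krein formula `F_{μ_α} = F_μ / (1 + α F_μ)`, that is,
`1 / F_{μ_α} = 1 / F_μ + α`. Hence `1 / F_{μ_α} - 1 / F_{μ_β} = α - β` on the upper half-plane.

At almost every point `x` of the singular part of `ν`, the symmetric derivative of `ν` is infinite,
and `Im F_ν(x + i r) ≥ ν(B(x, r)) / |B(x, r)|`, so `1 / F_ν(x + i r) → 0` as `r ↓ 0`. This cannot
happen at the same `x` for both `μ_α` and `μ_β`, because their reciprocals differ by the nonzero
constant `α - β`.
-/

open MeasureTheory Complex Set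

local notation "⟪" x ", " y "⟫" => @inner ℂ _ _ x y

open Bornology Filter Metric Topology

section Differentiation

variable {X : Type*} [MetricSpace X] [ProperSpace X]
  [HasBesicovitchCovering X] [MeasurableSpace X] [BorelSpace X]

lemma ae_tendsto_measure_closedBall_div_top {ρ μ : Measure X} [IsLocallyFiniteMeasure ρ]
    [IsLocallyFiniteMeasure μ] [μ.IsOpenPosMeasure] (h : ρ ⟂ₘ μ) :
    ∀ᵐ x ∂ρ, Tendsto (fun r => ρ (closedBall x r) / μ (closedBall x r)) (𝓝[>] 0) (𝓝 ⊤) := by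
  filter_upwards [Besicovitch.ae_tendsto_rnDeriv μ ρ, h.symm.rnDeriv_ae_eq_zero]
    with x hlim hzero
  rw [hzero, Pi.zero_apply] at hlim
  have hinv := tendsto_inv_iff.mpr hlim
  rw [ENNReal.inv_zero] at hinv
  refine hinv.congr' ?_
  filter_upwards [self_mem_nhdsWithin] with r hr
  exact ENNReal.inv_div (.inr measure_closedBall_lt_top.ne)
    (.inr (measure_closedBall_pos μ x hr).ne')

end Differentiation

section ResolventTransform

lemma memLp_resolvent {𝕜 A : Type*} [NontriviallyNormedField 𝕜] [MeasurableSpace 𝕜]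
    [CompleteSpace 𝕜] [HereditarilyLindelofSpace 𝕜] [OpensMeasurableSpace 𝕜]
    [NormedDivisionRing A] [NormedAlgebra 𝕜 A] [CompleteSpace A] [SecondCountableTopology A]
    [MeasurableSpace A] [BorelSpace A] {μ : Measure 𝕜} [IsFiniteMeasure μ] {a : A}
    (ha : a ∉ algebraMap 𝕜 A '' μ.support) (p : ENNReal) :
    MemLp (resolvent a : 𝕜 → A) p μ := by
  refine .of_bound (integrable_resolvent ha).aestronglyMeasurable
    (infDist a (algebraMap 𝕜 A '' μ.support))⁻¹ ?_
  filter_upwards [Measure.support_mem_ae] with x hx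
  exact norm_resolvent_le_inv_infDist_support ha hx

lemma notMem_image_algebraMap_of_im_ne_zero {z : ℂ} (hz : z.im ≠ 0) (s : Set ℝ) :
    z ∉ algebraMap ℝ ℂ '' s := by
  rintro ⟨t, -, rfl⟩
  exact hz (ofReal_im t)

lemma resolvent_ofReal (z : ℂ) (t : ℝ) : resolvent z t = ((t : ℂ) - z)⁻¹ := by
  simp [resolvent]

lemma im_resolvent_ofReal (z : ℂ) (t : ℝ) :
    (resolvent z t).im = z.im / ((t - z.re) ^ 2 + z.im ^ 2) := by
  simp [resolvent_ofReal, inv_im, normSq_apply, sq]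

lemma im_resolvent_ofReal_pos {z : ℂ} (hz : 0 < z.im) (t : ℝ) : 0 < (resolvent z t).im := by
  rw [im_resolvent_ofReal]
  positivity

variable {ν : Measure ℝ} [IsFiniteMeasure ν] {z : ℂ}

lemma integrable_resolvent_of_im_ne_zero (hz : z.im ≠ 0) :
    Integrable (resolvent z : ℝ → ℂ) ν :=
  integrable_resolvent (notMem_image_algebraMap_of_im_ne_zero hz _)

lemma im_resolventTransform (hz : z.im ≠ 0) :
    (resolventTransform ν z).im = ∫ t, (resolvent z t).im ∂ν :=
  (integral_im (integrable_resolvent_of_im_ne_zero hz)).symm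

lemma im_resolventTransform_pos (hν : ν ≠ 0) (hz : 0 < z.im) :
    0 < (resolventTransform ν z).im := by
  rw [im_resolventTransform hz.ne', integral_pos_iff_support_of_nonneg
    (fun t => (im_resolvent_ofReal_pos hz t).le) (integrable_resolvent_of_im_ne_zero hz.ne').im,
    Function.support_eq_univ fun t => (im_resolvent_ofReal_pos hz t).ne']
  exact Measure.measure_univ_pos.mpr hν

lemma one_add_mul_resolventTransform_ne_zero (α : ℝ) (hz : 0 < z.im) :
    1 + α * resolventTransform ν z ≠ 0 := by
  rcases eq_or_ne ν 0 with rfl | hν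
  · simp
  · intro h
    have him : α * (resolventTransform ν z).im = 0 := by simpa using congrArg Complex.im h
    have hα : α = 0 := (mul_eq_zero.mp him).resolve_right (im_resolventTransform_pos hν hz).ne'
    simp [hα] at h

-- On `closedBall x r` the kernel `r / ((t - x) ^ 2 + r ^ 2)` is at least `1 / (2 * r)`.
lemma measureReal_closedBall_div_le_im_resolventTransform (ν : Measure ℝ) [IsFiniteMeasure ν]
    (x : ℝ) {r : ℝ} (hr : 0 < r) :
    ν.real (closedBall x r) / (2 * r) ≤ (resolventTransform ν (x + r * I : ℂ)).im := by
  have hkernel (t : ℝ) : (resolvent (x + r * I : ℂ) t).im = r / ((t - x) ^ 2 + r ^ 2) := by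
    simp [im_resolvent_ofReal]
  have hz : 0 < (x + r * I : ℂ).im := by simpa using hr
  have hball : closedBall x r ⊆ {t : ℝ | (2 * r)⁻¹ ≤ (resolvent (x + r * I : ℂ) t).im} := by
    intro t ht
    rw [mem_closedBall, Real.dist_eq] at ht
    have hsq : (t - x) ^ 2 ≤ r ^ 2 := sq_le_sq.mpr (ht.trans (le_abs_self r))
    rw [mem_ofPred_eq, hkernel, inv_eq_one_div, div_le_div_iff₀ (by positivity) (by positivity)]
    linarith
  calc ν.real (closedBall x r) / (2 * r)
      = (2 * r)⁻¹ * ν.real (closedBall x r) := div_eq_inv_mul _ _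
    _ ≤ (2 * r)⁻¹ * ν.real {t : ℝ | (2 * r)⁻¹ ≤ (resolvent (x + r * I : ℂ) t).im} := by
      gcongr
      finiteness
    _ ≤ ∫ t, (resolvent (x + r * I : ℂ) t).im ∂ν :=
      mul_meas_ge_le_integral_of_nonneg (ae_of_all _ fun t => (im_resolvent_ofReal_pos hz t).le)
        (integrable_resolvent_of_im_ne_zero hz.ne').im _
    _ = (resolventTransform ν (x + r * I : ℂ)).im := (im_resolventTransform hz.ne').symm

lemma measure_closedBall_div_volume_le_im_resolventTransform (ν : Measure ℝ) [IsFiniteMeasure ν]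
    (x : ℝ) {r : ℝ} (hr : 0 < r) :
    ν (closedBall x r) / volume (closedBall x r)
      ≤ ENNReal.ofReal (resolventTransform ν (x + r * I : ℂ)).im := by
  rw [Real.volume_closedBall, ← ofReal_measureReal, ← ENNReal.ofReal_div_of_pos (by positivity)]
  exact ENNReal.ofReal_le_ofReal (measureReal_closedBall_div_le_im_resolventTransform ν x hr)

lemma ae_singularPart_tendsto_im_resolventTransform (ν : Measure ℝ) [IsFiniteMeasure ν] :
    ∀ᵐ x : ℝ ∂ν.singularPart volume,
      Tendsto (fun r : ℝ => (resolventTransform ν (x + r * I : ℂ)).im) (𝓝[>] 0) atTop := by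
  filter_upwards [ae_tendsto_measure_closedBall_div_top
    (Measure.mutuallySingular_singularPart ν volume)] with x hx
  refine ENNReal.tendsto_ofReal_nhds_top.mp (tendsto_nhds_top_mono hx ?_)
  filter_upwards [self_mem_nhdsWithin] with r hr
  exact (ENNReal.div_le_div_right (Measure.singularPart_le ν volume _) _).trans
    (measure_closedBall_div_volume_le_im_resolventTransform ν x hr)

lemma ae_singularPart_tendsto_resolventTransform_cobounded (ν : Measure ℝ) [IsFiniteMeasure ν] :
    ∀ᵐ x : ℝ ∂ν.singularPart volume,
      Tendsto (fun r : ℝ => resolventTransform ν (x + r * I : ℂ)) (𝓝[>] 0) (cobounded ℂ) := by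
  filter_upwards [ae_singularPart_tendsto_im_resolventTransform ν] with x hx
  exact tendsto_norm_atTop_iff_cobounded.mp
    (tendsto_atTop_mono (fun r => (le_abs_self _).trans (abs_im_le_norm _)) hx)

lemma mutuallySingular_singularPart_of_inv_resolventTransform_sub {ν₁ ν₂ : Measure ℝ}
    [IsFiniteMeasure ν₁] [IsFiniteMeasure ν₂] {c : ℂ} (hc : c ≠ 0)
    (h : ∀ z : ℂ, 0 < z.im → resolventTransform ν₁ z ≠ 0 → resolventTransform ν₂ z ≠ 0 →
      (resolventTransform ν₁ z)⁻¹ - (resolventTransform ν₂ z)⁻¹ = c) :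
    ν₁.singularPart volume ⟂ₘ ν₂.singularPart volume := by
  refine Measure.MutuallySingular.mk (ae_singularPart_tendsto_resolventTransform_cobounded ν₁)
    (ae_singularPart_tendsto_resolventTransform_cobounded ν₂) fun x _ => ?_
  by_contra hx
  obtain ⟨h₁, h₂⟩ := not_or.mp hx
  rw [mem_compl_iff, not_not, mem_ofPred_eq] at h₁ h₂
  have hlim_zero := (tendsto_inv₀_cobounded.comp h₁).sub (tendsto_inv₀_cobounded.comp h₂)
  rw [sub_zero] at hlim_zero
  refine hc (tendsto_nhds_unique (tendsto_const_nhds.congr' ?_) hlim_zero)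
  filter_upwards [self_mem_nhdsWithin, h₁.eventually_ne_cobounded 0,
    h₂.eventually_ne_cobounded 0] with r hr hne₁ hne₂
  exact (h _ (by simpa using hr) hne₁ hne₂).symm

end ResolventTransform

/-- `ν` is the spectral measure with respect to `1` of the rank-one perturbation
`M_t + α (·, 1) 1` of multiplication by `t` on `L²(μ)`. The resolvent equation is written for
functions, so that `M_t` may be unbounded: a solution `g ∈ L²(μ)` automatically lies in the domain
of `M_t`. The upper half-plane suffices, as the transform of `ν` is symmetric under conjugation. -/
def IsRankOneSpectralMeasure (μ : Measure ℝ) (α : ℝ) (ν : Measure ℝ) : Prop :=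
  ∀ z : ℂ, 0 < z.im → ∀ g : ℝ → ℂ, MemLp g 2 μ →
    (∀ᵐ t ∂μ, t * g t + α * ∫ s, g s ∂μ - z * g t = 1) → ∫ t, g t ∂μ = resolventTransform ν z

namespace IsRankOneSpectralMeasure

variable {μ ν : Measure ℝ} {α : ℝ}

lemma of_Lp {one : Lp ℂ 2 μ} (hone : (one : ℝ → ℂ) =ᵐ[μ] fun _ => 1) {T : Lp ℂ 2 μ → Lp ℂ 2 μ}
    (hT : ∀ g : Lp ℂ 2 μ, (T g : ℝ → ℂ) =ᵐ[μ] fun t => t * g t + (α : ℂ) * ⟪one, g⟫)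
    (hres : ∀ z : ℂ, 0 < z.im → ∀ g : Lp ℂ 2 μ,
      T g - z • g = one → ⟪one, g⟫ = ∫ t, ((t : ℂ) - z)⁻¹ ∂ν) :
    IsRankOneSpectralMeasure μ α ν := by
  intro z hz g hg hsol
  have hinner : ⟪one, hg.toLp g⟫ = ∫ t, g t ∂μ := by
    rw [L2.inner_def]
    refine integral_congr_ae ?_
    filter_upwards [hone, hg.coeFn_toLp] with t hone_t hg_t
    simp [hone_t, hg_t]
  rw [← hinner, hres z hz (hg.toLp g), resolventTransform_apply]
  · simp only [resolvent_ofReal]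
  · apply Lp.ext
    filter_upwards [hone, hg.coeFn_toLp, hT (hg.toLp g), Lp.coeFn_sub (T (hg.toLp g))
      (z • hg.toLp g), Lp.coeFn_smul z (hg.toLp g), hsol]
      with t hone_t hg_t hT_t hsub_t hsmul_t hsol_t
    rw [hsub_t, Pi.sub_apply, hT_t, hsmul_t, Pi.smul_apply, hg_t, hinner, hone_t, smul_eq_mul,
      hsol_t]

variable [IsFiniteMeasure μ] {z : ℂ}

lemma resolventTransform_eq_div (h : IsRankOneSpectralMeasure μ α ν) (hz : 0 < z.im) :
    resolventTransform ν z = resolventTransform μ z / (1 + α * resolventTransform μ z) := by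
  set F := resolventTransform μ z
  have hne : 1 + α * F ≠ 0 := one_add_mul_resolventTransform_ne_zero α hz
  have hg : MemLp (fun t : ℝ => (1 + α * F)⁻¹ * resolvent z t) 2 μ :=
    (memLp_resolvent (notMem_image_algebraMap_of_im_ne_zero hz.ne' _) 2).const_mul _
  have hint : ∫ t : ℝ, (1 + α * F)⁻¹ * resolvent z t ∂μ = (1 + α * F)⁻¹ * F :=
    integral_const_mul _ _
  rw [← h z hz _ hg (ae_of_all _ fun t => ?_), hint, div_eq_inv_mul]
  have hker : (t - z) * resolvent z t = 1 := by
    rw [resolvent_ofReal]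
    refine mul_inv_cancel₀ (sub_ne_zero.mpr fun htz => hz.ne' ?_)
    rw [← htz, ofReal_im]
  calc t * ((1 + α * F)⁻¹ * resolvent z t) + α * (∫ s : ℝ, (1 + α * F)⁻¹ * resolvent z s ∂μ)
        - z * ((1 + α * F)⁻¹ * resolvent z t)
      = (1 + α * F)⁻¹ * ((t - z) * resolvent z t + α * F) := by rw [hint]; ring
    _ = 1 := by rw [hker, inv_mul_cancel₀ hne]

lemma inv_resolventTransform (h : IsRankOneSpectralMeasure μ α ν) (hz : 0 < z.im)
    (hF : resolventTransform ν z ≠ 0) :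
    (resolventTransform ν z)⁻¹ = (resolventTransform μ z)⁻¹ + α := by
  have hdiv := h.resolventTransform_eq_div hz
  have hF₀ : resolventTransform μ z ≠ 0 := fun h₀ => hF (by rw [hdiv, h₀, zero_div])
  rw [hdiv, inv_div, add_div, one_div, mul_div_cancel_right₀ _ hF₀]

end IsRankOneSpectralMeasure

theorem aronszajn_donoghue_general {μ μα μβ : Measure ℝ} [IsFiniteMeasure μ] [IsFiniteMeasure μα]
    [IsFiniteMeasure μβ] {α β : ℝ} (hα : IsRankOneSpectralMeasure μ α μα)
    (hβ : IsRankOneSpectralMeasure μ β μβ) (hαβ : α ≠ β) :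
    μα.singularPart volume ⟂ₘ μβ.singularPart volume := by
  refine mutuallySingular_singularPart_of_inv_resolventTransform_sub (c := α - β)
    (sub_ne_zero.mpr (ofReal_injective.ne hαβ)) fun z hz hFα hFβ => ?_
  rw [hα.inv_resolventTransform hz hFα, hβ.inv_resolventTransform hz hFβ, add_sub_add_left_eq_sub]

/-- **Aronszajn–Donoghue.** For `α ≠ β`, the singular parts (with respect to
Lebesgue measure) of the spectral measures `μ_α` and `μ_β` are mutually
singular. -/
theorem aronszajn_donoghue
{μ : Measure ℝ} [IsFiniteMeasure μ]
    (hsupp : ∃ K : Set ℝ, IsCompact K ∧ μ Kᶜ = 0)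
    (one : Lp ℂ 2 μ) (hone : (one : ℝ → ℂ) =ᵐ[μ] fun _ => 1)
    (A : ℝ → (Lp ℂ 2 μ →L[ℂ] Lp ℂ 2 μ))
    (hA : ∀ (α : ℝ) (g : Lp ℂ 2 μ),
      (A α g : ℝ → ℂ) =ᵐ[μ] fun t => t * g t + (α : ℂ) * ⟪one, g⟫)
    (μm : ℝ → Measure ℝ)
    (hμm_fin : ∀ α, IsFiniteMeasure (μm α))
    (hμm0 : μm 0 = μ)
    (hres : ∀ (α : ℝ) (z : ℂ), z.im ≠ 0 → ∀ g : Lp ℂ 2 μ,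
      A α g - z • g = one → ⟪one, g⟫ = ∫ t, ((t : ℂ) - z)⁻¹ ∂(μm α))
    (α β : ℝ) (hαβ : α ≠ β) :
    ((μm α).singularPart volume).MutuallySingular
      ((μm β).singularPart volume) := by
  have spectral (γ : ℝ) : IsRankOneSpectralMeasure μ γ (μm γ) :=
    .of_Lp hone (hA γ) fun z hz => hres γ z hz.ne'
  exact aronszajn_donoghue_general (spectral α) (spectral β) hαβ
end
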